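/- Extension Lemma (counting extensions): Let n ≥ 1 and let φ be an order automorphism of D_n satisfying φ(H_{n+1}) = H_{n+1} (with φ acting by φ(S, k) = ({φ(H) : H ∈ S}, k) element-wise). Then the number of order automorphisms ψ of D_{n+1} whose restriction to D_n equals φ is exactly ∏_{(S,k) ∈ H_{n+1}} k!. -/

import Mathlib

/-- A finite digraph: a finite nonempty vertex set `Fin n` with a (Bool-valued)
edge relation, loops allowed. -/
structure FinDigraph where
  n : ℕ
  pos : 0 < n
  adj : Fin n → Fin n → Bool

namespace FinDigraph

/-- Isomorphism of finite digraphs. -/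
def Iso (G H : FinDigraph) : Prop :=
  ∃ e : Fin G.n ≃ Fin H.n, ∀ u v, H.adj (e u) (e v) = G.adj u v

theorem iso_refl (G : FinDigraph) : Iso G G := ⟨Equiv.refl _, fun _ _ => rfl⟩

theorem iso_symm {G H : FinDigraph} (h : Iso G H) : Iso H G := by
  obtain ⟨e, he⟩ := h
  refine ⟨e.symm, fun u v => ?_⟩
  rw [← he (e.symm u) (e.symm v), e.apply_symm_apply, e.apply_symm_apply]

theorem iso_trans {G H K : FinDigraph} (hGH : Iso G H) (hHK : Iso H K) : Iso G K := by
  obtain ⟨e, he⟩ := hGH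
  obtain ⟨f, hf⟩ := hHK
  exact ⟨e.trans f, fun u v => (hf (e u) (e v)).trans (he u v)⟩

instance isoSetoid : Setoid FinDigraph :=
  ⟨Iso, iso_refl, fun h => iso_symm h, fun h h' => iso_trans h h'⟩

/-- `Emb G H` : `G` is isomorphic to an induced subdigraph of `H`. -/
def Emb (G H : FinDigraph) : Prop :=
  ∃ f : Fin G.n ↪ Fin H.n, ∀ u v, H.adj (f u) (f v) = G.adj u v

end FinDigraph

/-- `D`: the isomorphism classes of finite digraphs. -/
def D : Type := Quotient FinDigraph.isoSetoid

/-- The isomorphism class of a finite digraph. -/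
def toD (G : FinDigraph) : D := Quotient.mk _ G

/-- The substructure (induced subdigraph) ordering `⊑` on `D`. -/
instance : LE D :=
  ⟨fun x y => ∃ G H : FinDigraph, x = toD G ∧ y = toD H ∧ FinDigraph.Emb G H⟩

/-- An order automorphism: a bijection such that `x ≤ y ↔ f x ≤ f y`. -/
def IsOrderAuto {α : Type*} [LE α] (f : α → α) : Prop :=
  Function.Bijective f ∧ ∀ x y : α, x ≤ y ↔ f x ≤ f y

/-- φ₁ on digraphs: complement the loop status of every vertex. -/
def phi1Fn (G : FinDigraph) : FinDigraph :=
  ⟨G.n, G.pos, fun u v => if u = v then !(G.adj u v) else G.adj u v⟩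

/-- Edge reversal: transpose the edge relation. -/
def revFn (G : FinDigraph) : FinDigraph :=
  ⟨G.n, G.pos, fun u v => G.adj v u⟩

/-- φ₂ on digraphs: toggle both edges between distinct loopless vertices joined
by both or neither of the two possible edges. -/
def phi2Fn (G : FinDigraph) : FinDigraph :=
  ⟨G.n, G.pos, fun u v =>
    if u ≠ v ∧ G.adj u u = false ∧ G.adj v v = false ∧ G.adj u v = G.adj v u then
      !(G.adj u v)
    else G.adj u v⟩

/-- φ₃ on digraphs: toggle both edges between distinct looped vertices joined
by both or neither of the two possible edges. -/
def phi3Fn (G : FinDigraph) : FinDigraph :=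
  ⟨G.n, G.pos, fun u v =>
    if u ≠ v ∧ G.adj u u = true ∧ G.adj v v = true ∧ G.adj u v = G.adj v u then
      !(G.adj u v)
    else G.adj u v⟩

/-- φ₄ on digraphs: reverse the single edge between distinct loopless vertices
joined by exactly one of the two possible edges. -/
def phi4Fn (G : FinDigraph) : FinDigraph :=
  ⟨G.n, G.pos, fun u v =>
    if u ≠ v ∧ G.adj u u = false ∧ G.adj v v = false ∧ G.adj u v ≠ G.adj v u then
      G.adj v u
    else G.adj u v⟩

/-- φ₅ on digraphs: reverse the single edge between distinct looped vertices
joined by exactly one of the two possible edges. -/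
def phi5Fn (G : FinDigraph) : FinDigraph :=
  ⟨G.n, G.pos, fun u v =>
    if u ≠ v ∧ G.adj u u = true ∧ G.adj v v = true ∧ G.adj u v ≠ G.adj v u then
      G.adj v u
    else G.adj u v⟩

/-- φ_π on digraphs: for each ordered pair `(u,v)` of distinct vertices with a loop at
`u` and no loop at `v`, replace its type `(Adj(u,v), Adj(v,u)) : Bool × Bool` by `π`
applied to it; everything else is unchanged. -/
def phiPiFn (π : Equiv.Perm (Bool × Bool)) (G : FinDigraph) : FinDigraph :=
  ⟨G.n, G.pos, fun u v =>
    if u = v then G.adj u v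
    else if G.adj u u = true ∧ G.adj v v = false then (π (G.adj u v, G.adj v u)).1
    else if G.adj u u = false ∧ G.adj v v = true then (π (G.adj v u, G.adj u v)).2
    else G.adj u v⟩

/-- The number of vertices of an isomorphism class. -/
def nVerts : D → ℕ :=
  Quotient.lift (fun G : FinDigraph => G.n) (fun _ _ h => by
    obtain ⟨e, -⟩ := h
    simpa using Fintype.card_congr e)

/-- `Dn n`: the classes of digraphs with at most `n` vertices (first `n` levels). -/
def Dn (n : ℕ) : Set D := {x : D | nVerts x ≤ n}

theorem mem_Dn_succ {n : ℕ} {x : D} (h : x ∈ Dn n) : x ∈ Dn (n + 1) :=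
  le_trans h (Nat.le_succ n)

/-- The set of lower covers of `x` in `(D, ⊑)`. -/
def lcov (x : D) : Set D :=
  {y : D | y ≤ x ∧ y ≠ x ∧ ∀ z : D, y ≤ z → z ≤ x → z = y ∨ z = x}

/-- `scount x` = number of classes sharing the lower-cover set of `x`. -/
noncomputable def scount (x : D) : ℕ := Nat.card {y : D // lcov y = lcov x}

/-- `Hset m` = `{(l(G), s(G)) : G ∈ D with exactly m vertices}`. -/
def Hset (m : ℕ) : Set (Set D × ℕ) :=
  {p : Set D × ℕ | ∃ x : D, nVerts x = m ∧ p = (lcov x, scount x)}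

/-- Element-wise action of a map of `Dn n` on a subset of `Dn n`. -/
def setImage {n : ℕ} (φ : ↥(Dn n) → ↥(Dn n)) (S : Set D) : Set D :=
  {z : D | ∃ (y : D) (h : y ∈ Dn n), y ∈ S ∧ z = ↑(φ ⟨y, h⟩)}

/-- Element-wise action of a map of `Dn n` on a set of pairs `(S, k)`. -/
def HsetImage {n : ℕ} (φ : ↥(Dn n) → ↥(Dn n)) (A : Set (Set D × ℕ)) : Set (Set D × ℕ) :=
  {p : Set D × ℕ | ∃ q ∈ A, p = (setImage φ q.1, q.2)}

/-- The swap permutation `σ(a,b) = (b,a)` of `Bool × Bool`. -/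
def sigmaSwap : Equiv.Perm (Bool × Bool) := Equiv.prodComm Bool Bool

/-- Restrictions to `D₃` of order automorphisms of `(D, ⊑)`. -/
def Aut3D : Set (↥(Dn 3) → ↥(Dn 3)) :=
  {g | ∃ φ : D → D, IsOrderAuto φ ∧ ∀ x : ↥(Dn 3), (↑(g x) : D) = φ ↑x}

/-- Restrictions to `D₃` of order automorphisms of `D₄`. -/
def Aut3D4 : Set (↥(Dn 3) → ↥(Dn 3)) :=
  {g | ∃ ψ : ↥(Dn 4) → ↥(Dn 4), IsOrderAuto ψ ∧
    ∀ x : ↥(Dn 3), (↑(g x) : D) = ↑(ψ ⟨↑x, mem_Dn_succ x.2⟩)}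

/-- Restrictions to `D₃` of order automorphisms of `D₄`, as order isomorphisms of `D₃`. -/
def Aut3D4Iso : Set (↥(Dn 3) ≃o ↥(Dn 3)) :=
  {g | ∃ ψ : ↥(Dn 4) → ↥(Dn 4), IsOrderAuto ψ ∧
    ∀ x : ↥(Dn 3), ((g x : ↥(Dn 3)) : D) = ↑(ψ ⟨↑x, mem_Dn_succ x.2⟩)}

/-! Since `D_{n+1}` is finite and every strict inequality in it starts in `D_n`, an automorphism of
`D_{n+1}` extending `φ` amounts to a permutation `e` of the digraphs with exactly `n + 1` vertices
such that `l(e(G)) = φ(l(G))`. The hypothesis `φ(H_{n+1}) = H_{n+1}` says that `G ↦ l(G)` and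
`G ↦ φ(l(G))` have fibers of the same sizes, so such permutations exist; they form a coset of the
group of permutations preserving `l`, which is the product of the symmetric groups on the fibers
of `l`. -/

section FiberPairs

open Equiv

variable {ι κ γ : Type*}

/-- The set of pairs (value of `l`, number of points at which `l` takes this value): the multiset
of values of `l`, encoded as a set so as to match `Hset`. -/
def fiberPairs (l : ι → γ) : Set (γ × ℕ) :=
  Set.range fun a => (l a, Nat.card {b // l b = l a})

theorem exists_equiv_comp_eq_of_card_fiber_eq [Finite ι] [Finite κ] {f : ι → γ} {g : κ → γ}
    (h : ∀ c, Nat.card {a // f a = c} = Nat.card {b // g b = c}) :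
    ∃ e : ι ≃ κ, g ∘ e = f := by
  have hequiv (c : γ) : Nonempty ({a // f a = c} ≃ {b // g b = c}) := Finite.card_eq.1 (h c)
  exact ⟨ofFiberEquiv fun c => (hequiv c).some, funext fun a => ofFiberEquiv_map _ a⟩

theorem card_perm_comp_eq_comp (l : ι → γ) (e₀ : Perm ι) :
    Nat.card {e : Perm ι // l ∘ e = l ∘ e₀} = Nat.card {g : Perm ι // l ∘ g = l} := by
  refine Nat.card_congr ((Equiv.mulRight e₀⁻¹).subtypeEquiv fun e => ?_)
  rw [Equiv.coe_mulRight, Perm.coe_mul, ← Function.comp_assoc]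
  exact (e₀.comp_symm_eq _ _).symm

open Classical in
theorem card_perm_comp_eq_self [Finite ι] (l : ι → γ) :
    Nat.card {g : Perm ι // l ∘ g = l} = ∏ᶠ p ∈ fiberPairs l, p.2.factorial := by
  have := Fintype.ofFinite ι
  have fiberPairs_eq : fiberPairs l =
      (fun c => (c, Nat.card {b // l b = c})) '' (Finset.univ.image l : Finset γ) := by
    simp only [fiberPairs, Finset.coe_image, Finset.coe_univ, Set.image_univ, ← Set.range_comp,
      Function.comp_def]
  rw [fiberPairs_eq, finprod_mem_image (fun _ _ _ _ h => congrArg Prod.fst h),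
    finprod_mem_coe_finset, Nat.card_eq_fintype_card, DomMulAct.stabilizer_card']
  simp only [Nat.card_eq_fintype_card]

variable {l : ι → γ} {σ : γ → γ}

theorem fst_image_fiberPairs (l : ι → γ) : Prod.fst '' fiberPairs l = Set.range l :=
  (Set.range_comp _ _).symm

theorem image_range_eq_of_image_fiberPairs_eq
    (h : Prod.map σ id '' fiberPairs l = fiberPairs l) : σ '' Set.range l = Set.range l := by
  rw [← fst_image_fiberPairs, ← Set.image_comm (f := Prod.fst) (f' := Prod.fst)
    (g := Prod.map σ (id : ℕ → ℕ)) fun _ => rfl, h]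

theorem card_fiber_eq_of_image_fiberPairs_eq
    (h : Prod.map σ id '' fiberPairs l = fiberPairs l) (a : ι) :
    Nat.card {b // l b = σ (l a)} = Nat.card {b // l b = l a} := by
  obtain ⟨b, hb⟩ : (σ (l a), Nat.card {b // l b = l a}) ∈ fiberPairs l :=
    h ▸ ⟨_, ⟨a, rfl⟩, rfl⟩
  obtain ⟨hb, hcard⟩ := Prod.mk.inj hb
  rw [← hb, hcard]

theorem card_perm_comp_eq_of_image_fiberPairs_eq [Finite ι]
    (h : Prod.map σ id '' fiberPairs l = fiberPairs l) :
    Nat.card {e : Perm ι // l ∘ e = σ ∘ l} = ∏ᶠ p ∈ fiberPairs l, p.2.factorial := by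
  have hrange := image_range_eq_of_image_fiberPairs_eq h
  have hinj : Set.InjOn σ (Set.range l) :=
    (Set.finite_range l).injOn_of_encard_image_eq (by rw [hrange])
  have hfiber (c : γ) : Nat.card {a // σ (l a) = c} = Nat.card {a // l a = c} := by
    by_cases hc : c ∈ Set.range l
    · obtain ⟨_, ⟨a, rfl⟩, rfl⟩ : c ∈ σ '' Set.range l := hrange.symm ▸ hc
      simp only [card_fiber_eq_of_image_fiberPairs_eq h, hinj.eq_iff, Set.mem_range_self]
    · have hσ : ∀ a, σ (l a) ≠ c := fun a ha => hc (hrange.subset ⟨l a, ⟨a, rfl⟩, ha⟩)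
      have hl : ∀ a, l a ≠ c := fun a ha => hc ⟨a, ha⟩
      simp only [hσ, hl]
  obtain ⟨e₀, he₀⟩ := exists_equiv_comp_eq_of_card_fiber_eq hfiber
  calc Nat.card {e : Perm ι // l ∘ e = σ ∘ l}
      = Nat.card {e : Perm ι // l ∘ e = l ∘ e₀} := by rw [he₀]; rfl
    _ = Nat.card {g : Perm ι // l ∘ g = l} := card_perm_comp_eq_comp l e₀
    _ = ∏ᶠ p ∈ fiberPairs l, p.2.factorial := card_perm_comp_eq_self l

end FiberPairs

section GluePerm

open Equiv Set

variable {α β : Type*} {i : β → α}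

open Classical in
/-- The permutation of `α` acting as `φ` on the copy `range i` of `β` in `α` and as `e` off it. -/
noncomputable def gluePerm (hi : Function.Injective i) (φ : Perm β) (e : Perm {a // a ∉ range i}) :
    Perm α :=
  Perm.subtypeCongr ((Equiv.ofInjective i hi).permCongr φ) e

theorem gluePerm_apply_image (hi : Function.Injective i) (φ : Perm β)
    (e : Perm {a // a ∉ range i}) (b : β) : gluePerm hi φ e (i b) = i (φ b) := by
  simp [gluePerm, Perm.subtypeCongr.left_apply]

theorem gluePerm_apply_notMem_range (hi : Function.Injective i) (φ : Perm β)
    (e : Perm {a // a ∉ range i}) (a : {a // a ∉ range i}) : gluePerm hi φ e a = e a := by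
  classical exact Perm.subtypeCongr.right_apply_subtype _ _ a

theorem mem_range_iff_of_extends {φ : Perm β} {ψ : Perm α} (hψ : ∀ b, ψ (i b) = i (φ b)) (a : α) :
    a ∈ range i ↔ ψ a ∈ range i := by
  constructor
  · rintro ⟨b, rfl⟩
    exact ⟨φ b, (hψ b).symm⟩
  · rintro ⟨c, hc⟩
    exact ⟨φ.symm c, ψ.injective (by rw [hψ, φ.apply_symm_apply, hc])⟩

end GluePerm

section Extension

open Equiv Set

variable {α β : Type*} [PartialOrder α] [PartialOrder β] {i : β ↪o α}

theorem lt_iff_exists_le_covBy [IsStronglyCoatomic α] (hi : ∀ ⦃x y : α⦄, x < y → x ∈ range i)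
    {b : β} {a : α} : i b < a ↔ ∃ c, b ≤ c ∧ i c ⋖ a := by
  constructor
  · intro hlt
    obtain ⟨x, hbx, hxa⟩ := exists_le_covBy_of_lt hlt
    obtain ⟨c, rfl⟩ := hi hxa.lt
    exact ⟨c, i.le_iff_le.1 hbx, hxa⟩
  · rintro ⟨c, hbc, hca⟩
    exact (i.monotone hbc).trans_lt hca.lt

theorem gluePerm_lt_gluePerm_iff [IsStronglyCoatomic α]
    (hi : ∀ ⦃x y : α⦄, x < y → x ∈ range i) (φ : β ≃o β) {e : Perm {a // a ∉ range i}}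
    (he : ∀ a b, i (φ b) ⋖ (e a : α) ↔ i b ⋖ (a : α)) (x y : α) :
    gluePerm i.injective φ e x < gluePerm i.injective φ e y ↔ x < y := by
  by_cases hx : x ∈ range i
  · obtain ⟨b, rfl⟩ := hx
    by_cases hy : y ∈ range i
    · obtain ⟨c, rfl⟩ := hy
      simp only [gluePerm_apply_image, i.lt_iff_lt]
      exact φ.lt_iff_lt
    · lift y to {a // a ∉ range i} using hy
      rw [gluePerm_apply_image, gluePerm_apply_notMem_range, lt_iff_exists_le_covBy hi,
        lt_iff_exists_le_covBy hi, ← φ.exists_congr_right]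
      simp [he]
  · lift x to {a // a ∉ range i} using hx
    rw [gluePerm_apply_notMem_range]
    exact iff_of_false (fun h => (e x).2 (hi h)) fun h => x.2 (hi h)

/-- Automorphisms of `α` extending the automorphism `φ` of `β` correspond to the permutations `e`
of the complement of `β` that transport lower covers along `φ`, provided that the complement
consists of maximal elements and `α` is strongly coatomic. -/
noncomputable def orderIsoExtensionEquiv [IsStronglyCoatomic α]
    (hi : ∀ ⦃x y : α⦄, x < y → x ∈ range i) (φ : β ≃o β) :
    {ψ : α ≃o α // ∀ b, ψ (i b) = i (φ b)} ≃
      {e : Perm {a // a ∉ range i} // ∀ a b, i (φ b) ⋖ (e a : α) ↔ i b ⋖ (a : α)} where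
  toFun ψ := ⟨ψ.1.toEquiv.subtypeEquiv fun a =>
      (mem_range_iff_of_extends (φ := φ.toEquiv) (ψ := ψ.1.toEquiv) ψ.2 a).not,
    fun a b => by simp [← ψ.2]⟩
  invFun e :=
    ⟨OrderIso.ofRelIsoLT ⟨gluePerm i.injective φ e, gluePerm_lt_gluePerm_iff hi φ e.2 _ _⟩,
      gluePerm_apply_image i.injective φ.toEquiv e.1⟩
  left_inv ψ := by
    ext x
    change gluePerm i.injective φ.toEquiv _ x = ψ.1 x
    by_cases hx : x ∈ range i
    · obtain ⟨b, rfl⟩ := hx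
      rw [gluePerm_apply_image, ψ.2]
      rfl
    · lift x to {a // a ∉ range i} using hx
      rw [gluePerm_apply_notMem_range]
      rfl
  right_inv e := by
    ext a
    exact gluePerm_apply_notMem_range i.injective φ.toEquiv e.1 a

end Extension

namespace IsOrderAuto

variable {α : Type*} [LE α]

/-- A map satisfying `IsOrderAuto`, bundled as an order isomorphism. -/
noncomputable def toOrderIso {f : α → α} (hf : IsOrderAuto f) : α ≃o α where
  toEquiv := Equiv.ofBijective f hf.1
  map_rel_iff' := (hf.2 _ _).symm

theorem card_subtype_and (p : (α → α) → Prop) :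
    Nat.card {f : α → α // IsOrderAuto f ∧ p f} = Nat.card {f : α ≃o α // p f} :=
  Nat.card_congr
    { toFun := fun f => ⟨f.2.1.toOrderIso, f.2.2⟩
      invFun := fun f => ⟨f.1, ⟨f.1.bijective, fun _ _ => f.1.le_iff_le.symm⟩, f.2⟩
      left_inv := fun _ => rfl
      right_inv := fun _ => by ext; rfl }

end IsOrderAuto

namespace FinDigraph

/-- The digraph on `Fin m` induced by `G` along an injection, i.e. the induced subdigraph of `G` on
the image of `f`. -/
def induce {m : ℕ} (hm : 0 < m) (G : FinDigraph) (f : Fin m ↪ Fin G.n) : FinDigraph :=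
  ⟨m, hm, fun u v => G.adj (f u) (f v)⟩

theorem induce_emb {m : ℕ} (hm : 0 < m) (G : FinDigraph) (f : Fin m ↪ Fin G.n) :
    Emb (induce hm G f) G :=
  ⟨f, fun _ _ => rfl⟩

theorem emb_induce {m : ℕ} (hm : 0 < m) {G H : FinDigraph} {f : Fin G.n ↪ Fin H.n}
    (hf : ∀ u v, H.adj (f u) (f v) = G.adj u v) {g : Fin m ↪ Fin H.n}
    (hfg : ∀ u, f u ∈ Set.range g) : Emb G (induce hm H g) := by
  choose k hk using hfg
  refine ⟨⟨k, fun u v huv => f.injective (by rw [← hk u, ← hk v, huv])⟩, fun u v => ?_⟩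
  change H.adj (g (k u)) (g (k v)) = G.adj u v
  rw [hk, hk, hf]

theorem Emb.n_le {G H : FinDigraph} : Emb G H → G.n ≤ H.n := by
  rintro ⟨f, -⟩
  simpa using Fintype.card_le_of_embedding f

theorem Emb.trans {G H K : FinDigraph} : Emb G H → Emb H K → Emb G K := by
  rintro ⟨f, hf⟩ ⟨g, hg⟩
  exact ⟨f.trans g, fun u v => (hg _ _).trans (hf u v)⟩

theorem Emb.iso_of_n_le {G H : FinDigraph} (h : Emb G H) (hn : H.n ≤ G.n) : Iso G H := by
  have hcard : G.n = H.n := h.n_le.antisymm hn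
  obtain ⟨f, hf⟩ := h
  have hbij : Function.Bijective f :=
    (Fintype.bijective_iff_injective_and_card f).2 ⟨f.injective, by simpa using hcard⟩
  exact ⟨Equiv.ofBijective f hbij, hf⟩

theorem Emb.exists_n_add_one_eq {G H : FinDigraph} (h : Emb G H) (hlt : G.n < H.n) :
    ∃ K, Emb G K ∧ Emb K H ∧ K.n + 1 = H.n := by
  obtain ⟨f, hf⟩ := h
  obtain ⟨_ | m, hpos, adj⟩ := H
  · exact absurd hpos (lt_irrefl 0)
  obtain ⟨w, hw⟩ : ∃ w, ∀ u, f u ≠ w := by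
    by_contra! hsurj
    have := Fintype.card_le_of_surjective f hsurj
    exact hlt.not_ge (by simpa using this)
  have hm : 0 < m := G.pos.trans_le (Nat.lt_succ_iff.1 hlt)
  exact ⟨induce hm ⟨m + 1, hpos, adj⟩ w.succAboveEmb,
    emb_induce hm hf fun u => Fin.exists_succAbove_eq (hw u), induce_emb _ _ _, rfl⟩

end FinDigraph

theorem toD_le_toD {G H : FinDigraph} : toD G ≤ toD H ↔ FinDigraph.Emb G H := by
  refine ⟨?_, fun h => ⟨G, H, rfl, rfl, h⟩⟩
  rintro ⟨G', H', hG, hH, h⟩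
  obtain ⟨e, he⟩ : FinDigraph.Iso G G' := Quotient.exact hG
  obtain ⟨e', he'⟩ : FinDigraph.Iso H' H := Quotient.exact hH.symm
  exact (FinDigraph.Emb.trans ⟨e.toEmbedding, he⟩ h).trans ⟨e'.toEmbedding, he'⟩

namespace D

theorem ind {P : D → Prop} (toD : ∀ G, P (toD G)) (x : D) : P x := Quotient.ind toD x

theorem nVerts_le_nVerts {x y : D} (h : x ≤ y) : nVerts x ≤ nVerts y := by
  induction x using ind
  induction y using ind
  exact (toD_le_toD.1 h).n_le

theorem eq_of_le_of_nVerts_le {x y : D} (h : x ≤ y) (hn : nVerts y ≤ nVerts x) : x = y := by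
  induction x using ind
  induction y using ind
  exact Quotient.sound ((toD_le_toD.1 h).iso_of_n_le hn)

instance : PartialOrder D where
  le := (· ≤ ·)
  le_refl x := by
    induction x using ind
    exact toD_le_toD.2 ⟨Function.Embedding.refl _, fun _ _ => rfl⟩
  le_trans x y z := by
    induction x using ind
    induction y using ind
    induction z using ind
    simp only [toD_le_toD]
    exact FinDigraph.Emb.trans
  le_antisymm _ _ hxy hyx := eq_of_le_of_nVerts_le hxy (nVerts_le_nVerts hyx)

theorem nVerts_lt_nVerts {x y : D} (h : x < y) : nVerts x < nVerts y :=
  lt_of_not_ge fun hn => h.ne (eq_of_le_of_nVerts_le h.le hn)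

theorem exists_nVerts_add_one_eq {x y : D} (h : x ≤ y) (hlt : nVerts x < nVerts y) :
    ∃ z, x ≤ z ∧ z ≤ y ∧ nVerts z + 1 = nVerts y := by
  induction x using ind
  induction y using ind
  obtain ⟨K, hGK, hKH, hK⟩ := (toD_le_toD.1 h).exists_n_add_one_eq hlt
  exact ⟨toD K, toD_le_toD.2 hGK, toD_le_toD.2 hKH, hK⟩

theorem nVerts_add_one_of_covBy {x y : D} (h : x ⋖ y) : nVerts x + 1 = nVerts y := by
  obtain ⟨z, hxz, hzy, hz⟩ := exists_nVerts_add_one_eq h.le (nVerts_lt_nVerts h.lt)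
  rcases h.eq_or_eq hxz hzy with rfl | rfl
  · exact hz
  · omega

theorem covBy_of_le_of_nVerts_add_one {x y : D} (h : x ≤ y) (hn : nVerts x + 1 = nVerts y) :
    x ⋖ y := by
  refine ⟨h.lt_of_ne (by rintro rfl; omega), fun z hxz hzy => ?_⟩
  have := nVerts_lt_nVerts hxz
  have := nVerts_lt_nVerts hzy
  omega

theorem mem_lcov_iff {x y : D} : y ∈ lcov x ↔ y ⋖ x := by
  rw [covBy_iff_lt_and_eq_or_eq, lt_iff_le_and_ne, and_assoc]; rfl

theorem nVerts_pos (x : D) : 0 < nVerts x := by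
  induction x using ind with | toD G =>
  exact G.pos

theorem lcov_nonempty {x : D} (hx : 1 < nVerts x) : (lcov x).Nonempty := by
  induction x using ind with | toD G =>
  have hG : 1 < G.n := hx
  let K := G.induce (Nat.sub_pos_of_lt hG) (Fin.castLEEmb (G.n.sub_le 1))
  refine ⟨toD K, mem_lcov_iff.2 (covBy_of_le_of_nVerts_add_one ?_ ?_)⟩
  · exact toD_le_toD.2 (FinDigraph.induce_emb _ _ _)
  · exact Nat.sub_add_cancel hG.le

theorem nVerts_eq_of_lcov_eq {x y : D} (h : lcov x = lcov y) : nVerts x = nVerts y := by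
  rcases (lcov x).eq_empty_or_nonempty with hx | ⟨z, hz⟩
  · have nVerts_eq_one {w : D} (hw : lcov w = ∅) : nVerts w = 1 :=
      (not_lt.1 fun hlt => (lcov_nonempty hlt).ne_empty hw).antisymm (nVerts_pos w)
    rw [nVerts_eq_one hx, nVerts_eq_one (h.symm.trans hx)]
  · have hzx := nVerts_add_one_of_covBy (mem_lcov_iff.1 hz)
    have hzy := nVerts_add_one_of_covBy (mem_lcov_iff.1 (h.subset hz))
    exact hzx.symm.trans hzy

instance finite_Dn (n : ℕ) : Finite (Dn n) := by
  let mk (p : Σ k : Fin n, Fin (k + 1) → Fin (k + 1) → Bool) : Dn n :=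
    ⟨toD ⟨p.1 + 1, p.1.val.succ_pos, p.2⟩, p.1.isLt⟩
  refine Finite.of_surjective mk ?_
  rintro ⟨x, hx⟩
  induction x using ind with | toD G =>
  obtain ⟨_ | k, hpos, adj⟩ := G
  · exact absurd hpos (lt_irrefl 0)
  · exact ⟨⟨⟨k, hx⟩, adj⟩, rfl⟩

theorem isLowerSet_Dn (n : ℕ) : IsLowerSet (Dn n) :=
  fun _ _ hyx hx => (nVerts_le_nVerts hyx).trans hx

/-- The inclusion of `D_n` into `D_{n+1}`. -/
def inclDn (n : ℕ) : Dn n ↪o Dn (n + 1) := Subtype.orderEmbedding fun _ => mem_Dn_succ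

/-- The top level of `D_{n+1}`: the classes with exactly `n + 1` vertices, encoded as the
complement of `D_n` in `D_{n+1}`. -/
abbrev TopLevel (n : ℕ) : Type := {a : Dn (n + 1) // a ∉ Set.range (inclDn n)}

variable {n : ℕ}

theorem mem_range_inclDn_iff {a : Dn (n + 1)} : a ∈ Set.range (inclDn n) ↔ (a : D) ∈ Dn n :=
  ⟨by rintro ⟨b, rfl⟩; exact b.2, fun ha => ⟨⟨a, ha⟩, rfl⟩⟩

theorem notMem_range_inclDn_iff {a : Dn (n + 1)} :
    a ∉ Set.range (inclDn n) ↔ nVerts a = n + 1 := by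
  have ha : nVerts a ≤ n + 1 := a.2
  rw [mem_range_inclDn_iff]
  change ¬ nVerts a ≤ n ↔ _
  omega

theorem nVerts_topLevel (a : TopLevel n) : nVerts a = n + 1 :=
  notMem_range_inclDn_iff.1 a.2

theorem mem_range_inclDn_of_lt ⦃x y : Dn (n + 1)⦄ (h : x < y) : x ∈ Set.range (inclDn n) :=
  mem_range_inclDn_iff.2 (Nat.lt_succ_iff.1 ((nVerts_lt_nVerts h).trans_le y.2))

theorem inclDn_covBy_iff {b : Dn n} {a : Dn (n + 1)} : inclDn n b ⋖ a ↔ (b : D) ∈ lcov a := by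
  have hconn : (Set.range (OrderEmbedding.subtype (· ∈ Dn (n + 1)))).OrdConnected := by
    simpa using (isLowerSet_Dn (n + 1)).ordConnected
  rw [mem_lcov_iff]
  exact (hconn.apply_covBy_apply_iff (OrderEmbedding.subtype (· ∈ Dn (n + 1)))).symm

theorem lcov_topLevel_subset (a : TopLevel n) : lcov (a : D) ⊆ Dn n := fun _ hy =>
  Nat.le_of_succ_le_succ <|
    (nVerts_add_one_of_covBy (mem_lcov_iff.1 hy)).trans_le (nVerts_topLevel a).le

theorem scount_topLevel (a : TopLevel n) :
    scount a = Nat.card {b : TopLevel n // lcov (b : D) = lcov (a : D)} :=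
  have hlevel {y : D} (hy : lcov y = lcov a) : nVerts y = n + 1 :=
    (nVerts_eq_of_lcov_eq hy).trans (nVerts_topLevel a)
  Nat.card_congr
    { toFun := fun y => ⟨⟨⟨y, (hlevel y.2).le⟩, notMem_range_inclDn_iff.2 (hlevel y.2)⟩, y.2⟩
      invFun := fun b => ⟨b.1, b.2⟩
      left_inv := fun _ => rfl
      right_inv := fun _ => rfl }

theorem Hset_succ_eq_fiberPairs (n : ℕ) :
    Hset (n + 1) = fiberPairs fun a : TopLevel n => lcov (a : D) := by
  ext p
  constructor
  · rintro ⟨x, hx, rfl⟩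
    let a : TopLevel n := ⟨⟨x, hx.le⟩, notMem_range_inclDn_iff.2 hx⟩
    exact ⟨a, congrArg (Prod.mk _) (scount_topLevel a).symm⟩
  · rintro ⟨a, rfl⟩
    exact ⟨a, nVerts_topLevel a, congrArg (Prod.mk _) (scount_topLevel a).symm⟩

end D

theorem HsetImage_eq_image {n : ℕ} (φ : Dn n → Dn n) (A : Set (Set D × ℕ)) :
    HsetImage φ A = Prod.map (setImage φ) id '' A :=
  Set.ext fun _ => exists_congr fun _ => and_congr_right fun _ => eq_comm

theorem eq_setImage_iff {n : ℕ} {φ : Dn n → Dn n} (hφ : Function.Bijective φ) {S T : Set D}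
    (hT : T ⊆ Dn n) : T = setImage φ S ↔ ∀ b : Dn n, (φ b : D) ∈ T ↔ (b : D) ∈ S := by
  constructor
  · rintro rfl b
    constructor
    · rintro ⟨c, hc, hcS, hbc⟩
      rwa [hφ.1 (Subtype.ext hbc)]
    · exact fun hb => ⟨b, b.2, hb, rfl⟩
  · intro h
    ext y
    constructor
    · intro hy
      obtain ⟨b, hb⟩ := hφ.2 ⟨y, hT hy⟩
      have hby : (φ b : D) = y := congrArg Subtype.val hb
      exact ⟨b, b.2, (h b).1 (hby ▸ hy), hby.symm⟩
    · rintro ⟨b, hb, hbS, rfl⟩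
      exact (h ⟨b, hb⟩).2 hbS

theorem D.forall_covBy_iff_lcov_eq {n : ℕ} {φ : Dn n → Dn n} (hφ : Function.Bijective φ)
    {e : D.TopLevel n → D.TopLevel n} :
    (∀ a b, D.inclDn n (φ b) ⋖ (e a : Dn (n + 1)) ↔ D.inclDn n b ⋖ (a : Dn (n + 1))) ↔
      ∀ a, lcov (e a : D) = setImage φ (lcov (a : D)) := by
  simp only [D.inclDn_covBy_iff, eq_setImage_iff hφ (D.lcov_topLevel_subset _)]

/-- Extension Lemma, counting extensions: an order automorphism `φ` of
`D_n` with `φ(H_{n+1}) = H_{n+1}` has exactly `∏_{(S,k) ∈ H_{n+1}} k!` extensions to an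
order automorphism of `D_{n+1}`. -/
theorem extension_lemma_count (n : ℕ) (hn : 1 ≤ n)
    (φ : ↥(Dn n) → ↥(Dn n)) (hφ : IsOrderAuto φ)
    (hH : HsetImage φ (Hset (n + 1)) = Hset (n + 1)) :
    Nat.card {ψ : ↥(Dn (n + 1)) → ↥(Dn (n + 1)) // IsOrderAuto ψ ∧
        ∀ (x : D) (hx : x ∈ Dn n), (↑(ψ ⟨x, mem_Dn_succ hx⟩) : D) = ↑(φ ⟨x, hx⟩)}
      = ∏ᶠ p ∈ Hset (n + 1), Nat.factorial (Prod.snd p) := by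
  let l (a : D.TopLevel n) : Set D := lcov (a : D)
  have hl : Prod.map (setImage φ) id '' fiberPairs l = fiberPairs l := by
    rwa [← HsetImage_eq_image, ← D.Hset_succ_eq_fiberPairs]
  rw [IsOrderAuto.card_subtype_and, D.Hset_succ_eq_fiberPairs]
  calc Nat.card {ψ : Dn (n + 1) ≃o Dn (n + 1) //
        ∀ (x : D) (hx : x ∈ Dn n), (ψ ⟨x, mem_Dn_succ hx⟩ : D) = φ ⟨x, hx⟩}
      = Nat.card {ψ : Dn (n + 1) ≃o Dn (n + 1) //
          ∀ b, ψ (D.inclDn n b) = D.inclDn n (hφ.toOrderIso b)} :=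
        Nat.card_congr <| Equiv.subtypeEquivRight fun ψ => by
          simp only [Subtype.forall, Subtype.ext_iff]; rfl
    _ = Nat.card {e : Equiv.Perm (D.TopLevel n) // l ∘ e = setImage φ ∘ l} :=
        Nat.card_congr <| (orderIsoExtensionEquiv D.mem_range_inclDn_of_lt hφ.toOrderIso).trans <|
          Equiv.subtypeEquivRight fun _ => (D.forall_covBy_iff_lcov_eq hφ.1).trans funext_iff.symm
    _ = ∏ᶠ p ∈ fiberPairs l, p.2.factorial := card_perm_comp_eq_of_image_fiberPairs_eq hl
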